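/- For every integer n ≥ 1, the transitive tournament T_n on n vertices satisfies adi(T_n) = 1 and dac(T_n) = ⌈n/2⌉. -/

import Mathlib

open Function

section Defs

variable {V : Type*}

/-- The vertex set `S` contains a directed cycle of the digraph `D`, i.e. there is a
closed directed walk of positive length all of whose vertices lie in `S`. -/
def HasDicycle (D : V → V → Prop) (S : Set V) : Prop :=
  ∃ v, Relation.TransGen (fun a b => a ∈ S ∧ b ∈ S ∧ D a b) v v

/-- A coloring of the vertices of the digraph `D` with `k` colors all of whose color
classes are acyclic. -/
def IsAcyclicColoring (D : V → V → Prop) {k : ℕ} (c : V → Fin k) : Prop :=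
  ∀ i, ¬ HasDicycle D (c ⁻¹' {i})

/-- A complete acyclic coloring of the digraph `D` with exactly `k` colors: every color is
used, every color class is acyclic, and the union of any two distinct color classes
contains a directed cycle. -/
def IsCompleteAcyclicColoring (D : V → V → Prop) {k : ℕ} (c : V → Fin k) : Prop :=
  Surjective c ∧ IsAcyclicColoring D c ∧
    ∀ i j : Fin k, i ≠ j → HasDicycle D (c ⁻¹' {i} ∪ c ⁻¹' {j})

/-- The dichromatic number: the minimum number of colors in an acyclic coloring. -/
noncomputable def dichromaticNumber (D : V → V → Prop) : ℕ :=
  sInf {k | ∃ c : V → Fin k, IsAcyclicColoring D c}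

/-- The adichromatic number: the maximum number of colors in a complete acyclic coloring. -/
noncomputable def adichromaticNumber (D : V → V → Prop) : ℕ :=
  sSup {k | ∃ c : V → Fin k, IsCompleteAcyclicColoring D c}

/-- A coloring of the vertices of the graph `G` all of whose color classes induce forests. -/
def IsArborealColoring (G : SimpleGraph V) {k : ℕ} (c : V → Fin k) : Prop :=
  ∀ i, (G.induce (c ⁻¹' {i})).IsAcyclic

/-- A complete arboreal coloring of `G` with exactly `k` colors: every color is used, every
color class induces a forest, and the union of any two distinct color classes contains a
cycle. -/
def IsCompleteArborealColoring (G : SimpleGraph V) {k : ℕ} (c : V → Fin k) : Prop :=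
  Surjective c ∧ IsArborealColoring G c ∧
    ∀ i j : Fin k, i ≠ j → ¬ (G.induce (c ⁻¹' {i} ∪ c ⁻¹' {j})).IsAcyclic

/-- The vertex arboricity: the minimum number of colors in an arboreal coloring. -/
noncomputable def vertexArboricity (G : SimpleGraph V) : ℕ :=
  sInf {k | ∃ c : V → Fin k, IsArborealColoring G c}

/-- The a-vertex arboricity: the maximum number of colors in a complete arboreal coloring. -/
noncomputable def avertexArboricity (G : SimpleGraph V) : ℕ :=
  sSup {k | ∃ c : V → Fin k, IsCompleteArborealColoring G c}

/-- The minimum size of a directed feedback vertex set of the digraph `D`. -/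
noncomputable def digraphFVSNumber [Fintype V] (D : V → V → Prop) : ℕ :=
  sInf {n | ∃ F : Finset V, F.card = n ∧ ¬ HasDicycle D ((↑F : Set V)ᶜ)}

/-- The minimum size of a feedback vertex set of the graph `G`. -/
noncomputable def graphFVSNumber [Fintype V] (G : SimpleGraph V) : ℕ :=
  sInf {n | ∃ F : Finset V, F.card = n ∧ (G.induce ((↑F : Set V)ᶜ)).IsAcyclic}

/-- A complete coloring in the sense of the diachromatic number: all classes are acyclic
and for every ordered pair `(i, j)` of distinct colors there is an arc with tail colored
`j` and head colored `i`. -/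
def IsCompleteDiColoring (D : V → V → Prop) {k : ℕ} (c : V → Fin k) : Prop :=
  Surjective c ∧ IsAcyclicColoring D c ∧
    ∀ i j : Fin k, i ≠ j → ∃ u v, D u v ∧ c u = j ∧ c v = i

/-- The diachromatic number of the digraph `D`. -/
noncomputable def diachromaticNumber (D : V → V → Prop) : ℕ :=
  sSup {k | ∃ c : V → Fin k, IsCompleteDiColoring D c}

/-- A complete proper coloring of the graph `G`: proper, surjective, and any two distinct
colors appear together on some edge. -/
def IsCompleteProperColoring (G : SimpleGraph V) {k : ℕ} (c : V → Fin k) : Prop :=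
  Surjective c ∧ (∀ u v, G.Adj u v → c u ≠ c v) ∧
    ∀ i j : Fin k, i ≠ j → ∃ u v, G.Adj u v ∧ c u = i ∧ c v = j

/-- The achromatic number: the maximum number of colors in a complete proper coloring. -/
noncomputable def achromaticNumber (G : SimpleGraph V) : ℕ :=
  sSup {k | ∃ c : V → Fin k, IsCompleteProperColoring G c}

/-- The subdigraph of `D` induced by the vertex set `S`. -/
def induceDigraph (D : V → V → Prop) (S : Set V) : S → S → Prop :=
  fun a b => D a.1 b.1

/-- `D` is an orientation of the simple graph `G`: every arc of `D` is an edge of `G`, and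
every edge of `G` is given exactly one of its two possible directions. -/
def IsOrientation (G : SimpleGraph V) (D : V → V → Prop) : Prop :=
  (∀ u v, D u v → G.Adj u v) ∧ ∀ u v, G.Adj u v → Xor' (D u v) (D v u)

end Defs

/-!
A transitive tournament has no directed cycle at all, so a complete acyclic coloring cannot have two
distinct classes.

For `dac`, two one-vertex classes span at most one arc of an asymmetric digraph, so a complete
coloring has at most one class of size one; counting vertices gives `2k ≤ n + 1`. Coloring the
vertices by their residues modulo `⌈n/2⌉` attains this bound.
-/

section Acyclic

variable {V : Type*} {D : V → V → Prop}

theorem HasDicycle.mono {S T : Set V} (hST : S ⊆ T) : HasDicycle D S → HasDicycle D T :=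
  Exists.imp fun v => Relation.TransGen.mono (fun _ _ h => ⟨hST h.1, hST h.2.1, h.2.2⟩) v v

theorem not_hasDicycle_lt [Preorder V] (S : Set V) : ¬ HasDicycle (fun u v : V => u < v) S := by
  rintro ⟨v, hv⟩
  have hlt : Relation.TransGen (· < ·) v v :=
    Relation.TransGen.mono (fun _ _ h => h.2.2) v v hv
  rw [Relation.transGen_eq_self] at hlt
  exact lt_irrefl v hlt

theorem adichromaticNumber_eq_one_of_not_hasDicycle [Nonempty V]
    (hD : ¬ HasDicycle D Set.univ) : adichromaticNumber D = 1 := by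
  have acyclic (S : Set V) : ¬ HasDicycle D S := fun h => hD (h.mono S.subset_univ)
  refine IsGreatest.csSup_eq ⟨⟨fun _ => 0, surjective_to_subsingleton _, fun _ => acyclic _,
    fun i j hij => absurd (Subsingleton.elim i j) hij⟩, ?_⟩
  rintro k ⟨c, -, -, hcycle⟩
  by_contra! hk
  exact acyclic _ (hcycle ⟨0, by omega⟩ ⟨1, hk⟩ (by simp))

end Acyclic

section UpperBound

open scoped Finset

variable {V : Type*}

open scoped Classical in
theorem two_mul_card_le_card_add_card_subsingleton_fiber {ι : Type*} [Fintype V] [Fintype ι]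
    {f : V → ι} (hf : Surjective f) :
    2 * Fintype.card ι ≤ Fintype.card V + #{i | (f ⁻¹' {i}).Subsingleton} := by
  have two_le (i : ι) : 2 ≤ #{v | f v = i} + if (f ⁻¹' {i}).Subsingleton then 1 else 0 := by
    split_ifs with hi
    · obtain ⟨v, hv⟩ := hf i
      have : 0 < #{v | f v = i} := Finset.card_pos.mpr ⟨v, by simp [hv]⟩
      omega
    · obtain ⟨u, hu, v, hv, huv⟩ := Set.not_subsingleton_iff.mp hi
      exact Finset.one_lt_card.mpr ⟨u, by simpa using hu, v, by simpa using hv, huv⟩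
  calc 2 * Fintype.card ι = ∑ _i : ι, 2 := by simp [mul_comm]
    _ ≤ ∑ i, (#{v | f v = i} + if (f ⁻¹' {i}).Subsingleton then 1 else 0) :=
      Finset.sum_le_sum fun i _ => two_le i
    _ = Fintype.card V + #{i | (f ⁻¹' {i}).Subsingleton} := by
      rw [Finset.sum_add_distrib, ← Finset.card_filter, ← Finset.card_univ (α := V),
        Finset.card_eq_sum_card_fiberwise fun v _ => Finset.mem_coe.mpr (Finset.mem_univ (f v))]

variable {D : V → V → Prop} [Std.Asymm D] {k : ℕ} {c : V → Fin k}

theorem IsCompleteDiColoring.eq_of_subsingleton_of_subsingleton (hc : IsCompleteDiColoring D c)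
    {i j : Fin k} (hi : (c ⁻¹' {i}).Subsingleton) (hj : (c ⁻¹' {j}).Subsingleton) : i = j := by
  by_contra hij
  obtain ⟨u, v, huv, hu, hv⟩ := hc.2.2 i j hij
  obtain ⟨v', u', hvu, hv', hu'⟩ := hc.2.2 j i (Ne.symm hij)
  obtain rfl : v' = v := hi hv' hv
  obtain rfl : u' = u := hj hu' hu
  exact Std.Asymm.asymm _ _ huv hvu

theorem IsCompleteDiColoring.two_mul_le_card_add_one [Fintype V] (hc : IsCompleteDiColoring D c) :
    2 * k ≤ Fintype.card V + 1 := by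
  classical
  have card_le_one : #{i | (c ⁻¹' {i}).Subsingleton} ≤ 1 :=
    Finset.card_le_one.mpr fun i hi j hj => hc.eq_of_subsingleton_of_subsingleton
      (Finset.mem_filter.mp hi).2 (Finset.mem_filter.mp hj).2
  calc 2 * k = 2 * Fintype.card (Fin k) := by rw [Fintype.card_fin]
    _ ≤ Fintype.card V + #{i | (c ⁻¹' {i}).Subsingleton} :=
      two_mul_card_le_card_add_card_subsingleton_fiber hc.1
    _ ≤ Fintype.card V + 1 := by gcongr

end UpperBound

section ResidueColoring

variable {n m : ℕ} [NeZero m]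

/-- The coloring of the vertices `0, …, n - 1` by their residues modulo `m`. With `m = ⌈n/2⌉` it is
an optimal complete coloring of the transitive tournament in the sense of `diachromaticNumber`. -/
def residueColoring (n m : ℕ) [NeZero m] (v : Fin n) : Fin m :=
  Fin.ofNat m v

theorem residueColoring_mk_val (i : Fin m) (hi : i.val < n) :
    residueColoring n m ⟨i, hi⟩ = i :=
  Fin.ofNat_val_eq_self i

theorem residueColoring_mk_val_add (i : Fin m) (hi : i.val + m < n) :
    residueColoring n m ⟨i + m, hi⟩ = i := by
  ext
  simp [residueColoring, Nat.mod_eq_of_lt i.isLt]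

theorem isCompleteDiColoring_residueColoring (hm : 2 * m ≤ n + 1) :
    IsCompleteDiColoring (fun u v : Fin n => u < v) (residueColoring n m) := by
  have val_lt (i : Fin m) : i.val < n := by omega
  refine ⟨fun i => ⟨⟨i, val_lt i⟩, residueColoring_mk_val i _⟩, fun _ => not_hasDicycle_lt _,
    fun i j hij => ?_⟩
  rcases hij.lt_or_gt with hlt | hgt
  · have add_lt : i.val + m < n := by omega
    have arc : j.val < i.val + m := by omega
    exact ⟨⟨j, val_lt j⟩, ⟨i + m, add_lt⟩, arc, residueColoring_mk_val j _,
      residueColoring_mk_val_add i _⟩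
  · exact ⟨⟨j, val_lt j⟩, ⟨i, val_lt i⟩, hgt, residueColoring_mk_val j _,
      residueColoring_mk_val i _⟩

end ResidueColoring

/-- For the transitive tournament `T_n` (`n ≥ 1`), `adi(T_n) = 1` and
`dac(T_n) = ⌈n/2⌉`. -/
theorem transitive_tournament_adi_dac (n : ℕ) (hn : 1 ≤ n) :
    adichromaticNumber (fun i j : Fin n => i < j) = 1 ∧
      diachromaticNumber (fun i j : Fin n => i < j) = (n + 1) / 2 := by
  have : Nonempty (Fin n) := ⟨⟨0, hn⟩⟩
  have : NeZero ((n + 1) / 2) := ⟨by omega⟩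
  refine ⟨adichromaticNumber_eq_one_of_not_hasDicycle (not_hasDicycle_lt _),
    IsGreatest.csSup_eq ⟨⟨residueColoring n _,
      isCompleteDiColoring_residueColoring (by omega)⟩, ?_⟩⟩
  rintro k ⟨c, hc⟩
  have two_mul_le : 2 * k ≤ n + 1 := by simpa using hc.two_mul_le_card_add_one
  omega
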